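/- Fix p ∈ (0,1) and c ∈ ℝ with |c| < 2√(p(1−p)), and set φ = arccos( c(1−2p) / (2√((1−c²)·p(1−p))) ) ∈ (0, π). Let a : ℕ → ℤ satisfy a_N/N → c. Then for all fixed integers u, v, the Krawtchouk kernel converges to the discrete sine kernel under the shift by N + a_N: lim_{N→∞} K^{kr}_{p, 2N−1, N}(N + a_N + u, N + a_N + v) = sin(φ(u−v))/(π(u−v)) when u ≠ v, and = φ/π when u = v. (Here for N large enough N + a_N + u and N + a_N + v lie in {0, 1, …, 2N−1}; for other N the kernel value is set to 0.) -/

import Mathlib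

open Filter
open scoped Nat Topology

noncomputable section

/-- The Krawtchouk polynomial of degree `m` on `{0,…,L}` with parameter `p`:
`K_m(x;p,L) = Σ_{k=0}^m (−1)^k·(m choose k)·(x choose k)·k!·((L−k)!/L!)·p^{−k}`. -/
def krawtchouk (p : ℝ) (L m x : ℕ) : ℝ :=
  ∑ k ∈ Finset.range (m + 1),
    (-1 : ℝ) ^ k * (m.choose k : ℝ) * (x.choose k : ℝ) * (k ! : ℝ) *
      (((L - k)! : ℝ) / (L ! : ℝ)) / p ^ k

/-- The normalized Krawtchouk function
`K̃_m(x;p,L) = (W_{p,L}(x))^{1/2}·(L choose m)^{1/2}·(p/(1−p))^{m/2}·K_m(x;p,L)`,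
where `W_{p,L}(x) = (L choose x)·p^x·(1−p)^{L−x}` is the binomial weight. -/
def normalizedKrawtchouk (p : ℝ) (L m x : ℕ) : ℝ :=
  Real.sqrt ((L.choose x : ℝ) * p ^ x * (1 - p) ^ (L - x)) *
    Real.sqrt (L.choose m : ℝ) * Real.sqrt ((p / (1 - p)) ^ m) * krawtchouk p L m x

/-- The `N`-particle Krawtchouk kernel
`K^{kr}_{p,L,N}(x,y) = Σ_{m=0}^{N−1} K̃_m(x;p,L)·K̃_m(y;p,L)`. -/
def krawtchoukKernel (p : ℝ) (L N : ℕ) (x y : ℕ) : ℝ :=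
  ∑ m ∈ Finset.range N, normalizedKrawtchouk p L m x * normalizedKrawtchouk p L m y

/-!
For fixed `x`, the function `m ↦ K̃_m(x;p,L)` satisfies a three-term recurrence in `x` under
multiplication by `m`, because the Krawtchouk polynomials are eigenfunctions of the Ehrenfest chain.
These functions are also orthonormal, so they diagonalize a Jacobi matrix with spectrum `{0, …, L}`,
and the kernel `K^{kr}_{p,L,N}` is its spectral projection onto `m / N < 1`.

After division by `N`, the entries of this Jacobi matrix near a macroscopic position converge to
constants `A` and `-B`. The recurrence then makes the entries of every power converge to those of
the bi-infinite Toeplitz Jacobi matrix with symbol `A - 2 * B * cos θ`. Weierstrass approximation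
passes to continuous functions, and since the symbol takes each value on a null set, also to the
indicator function of `Iio 1`. The Fourier coefficients of `{θ | A - 2 * B * cos θ < 1}` are the
discrete sine kernel.
-/

section Binomial

theorem cast_choose_succ_mul {R : Type*} [Ring R] (n k : ℕ) :
    (n.choose (k + 1) : R) * (k + 1) = n.choose k * (n - k) := by
  rcases le_or_gt k n with hk | hk
  · rw [← Nat.cast_sub hk]
    exact_mod_cast congrArg (Nat.cast (R := R)) (n.choose_succ_right_eq k)
  · simp [Nat.choose_eq_zero_of_lt hk, Nat.choose_eq_zero_of_lt (hk.trans k.lt_succ_self)]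

theorem cast_mul_choose_sub_choose_pred {R : Type*} [CommRing R] (n k : ℕ) :
    (n : R) * (n.choose k - (n - 1).choose k) = k * n.choose k := by
  rcases n with _ | n
  · cases k <;> simp
  rcases k with _ | k
  · simp
  have absorption : ((n + 1 : ℕ) : R) * n.choose k = (n + 1).choose (k + 1) * (k + 1 : ℕ) := by
    exact_mod_cast congrArg (Nat.cast (R := R)) (Nat.add_one_mul_choose_eq n k)
  rw [Nat.add_sub_cancel, mul_comm ((k + 1 : ℕ) : R), ← absorption, Nat.choose_succ_succ']
  push_cast
  ring

theorem sum_range_choose_mul_choose_mul_pow {R : Type*} [CommSemiring R] (x y : R) {n k : ℕ}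
    (hk : k ≤ n) :
    ∑ m ∈ Finset.range (n + 1), (n.choose m : R) * x ^ m * y ^ (n - m) * m.choose k =
      n.choose k * x ^ k * (x + y) ^ (n - k) := by
  have initial_terms : ∑ m ∈ Finset.range k,
      (n.choose m : R) * x ^ m * y ^ (n - m) * m.choose k = 0 :=
    Finset.sum_eq_zero fun m hm ↦ by
      rw [Nat.choose_eq_zero_of_lt (Finset.mem_range.mp hm), Nat.cast_zero, mul_zero]
  rw [show n + 1 = k + (n - k + 1) by omega, Finset.sum_range_add, initial_terms, zero_add,
    add_pow, Finset.mul_sum]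
  refine Finset.sum_congr rfl fun j _ ↦ ?_
  have trinomial : (n.choose (k + j) : R) * (k + j).choose k = n.choose k * (n - k).choose j := by
    have h := Nat.choose_mul (n := n) (Nat.le_add_right k j)
    rw [Nat.add_sub_cancel_left] at h
    exact_mod_cast congrArg (Nat.cast (R := R)) h
  calc (n.choose (k + j) : R) * x ^ (k + j) * y ^ (n - (k + j)) * (k + j).choose k
      = (n.choose (k + j) * (k + j).choose k) * (x ^ (k + j) * y ^ (n - (k + j))) := by ring
    _ = n.choose k * x ^ k * (x ^ j * y ^ (n - k - j) * (n - k).choose j) := by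
      rw [trinomial, pow_add, Nat.sub_add_eq]
      ring

end Binomial

section DifferenceEquation

variable {p : ℝ} {L m x k : ℕ}

/-- The coefficient of `x.choose k` in the Krawtchouk polynomial of degree `m`. -/
def krawtchoukCoeff (p : ℝ) (L m k : ℕ) : ℝ :=
  (-1) ^ k * m.choose k * k ! * ((L - k)! / L !) / p ^ k

theorem krawtchouk_eq_sum_coeff (p : ℝ) (L m x : ℕ) :
    krawtchouk p L m x = ∑ k ∈ Finset.range (m + 1), krawtchoukCoeff p L m k * x.choose k :=
  Finset.sum_congr rfl fun k _ ↦ by rw [krawtchoukCoeff]; ring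

theorem krawtchouk_comm (p : ℝ) (L m x : ℕ) : krawtchouk p L m x = krawtchouk p L x m := by
  have extend_range : ∀ {m M : ℕ} (x : ℕ), m ≤ M → krawtchouk p L m x =
      ∑ k ∈ Finset.range (M + 1), krawtchoukCoeff p L m k * x.choose k := by
    intro m M x hmM
    rw [krawtchouk_eq_sum_coeff]
    refine Finset.sum_subset (Finset.range_mono (by omega)) fun k _ hk ↦ ?_
    rw [krawtchoukCoeff, Nat.choose_eq_zero_of_lt (by simpa using hk)]
    simp
  rw [extend_range x (le_max_left m x), extend_range m (le_max_right m x)]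
  exact Finset.sum_congr rfl fun k _ ↦ by simp only [krawtchoukCoeff]; ring

theorem krawtchoukCoeff_succ (hp : p ≠ 0) (hk : k < L) :
    p * (L - k) * krawtchoukCoeff p L m (k + 1) = -(m - k) * krawtchoukCoeff p L m k := by
  have hfactorial : ((L - k)! : ℝ) = (L - k) * (L - (k + 1))! := by
    rw [← Nat.cast_sub hk.le, show L - k = L - (k + 1) + 1 by omega, Nat.factorial_succ]
    push_cast
    ring
  have hchoose := cast_choose_succ_mul (R := ℝ) m k
  simp only [krawtchoukCoeff, hfactorial, Nat.factorial_succ]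
  push_cast
  field_simp
  linear_combination ((-1) ^ (k + 1) * (L - k : ℝ) * p ^ (k + 1)) * hchoose

/-- The generator of the Ehrenfest birth–death chain on `{0, …, L}`, which has the binomial weight
as its reversible measure and the Krawtchouk polynomials as its eigenfunctions. Truncated
subtraction at `x = 0` is harmless because the death rate vanishes there. -/
def ehrenfestGenerator (p : ℝ) (L : ℕ) (f : ℕ → ℝ) (x : ℕ) : ℝ :=
  p * (L - x) * (f (x + 1) - f x) - (1 - p) * x * (f x - f (x - 1))

theorem ehrenfestGenerator_sum (p : ℝ) (L : ℕ) {ι : Type*} (s : Finset ι) (c : ι → ℝ)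
    (f : ι → ℕ → ℝ) (x : ℕ) :
    ehrenfestGenerator p L (fun x ↦ ∑ k ∈ s, c k * f k x) x =
      ∑ k ∈ s, c k * ehrenfestGenerator p L (f k) x := by
  simp only [ehrenfestGenerator, ← Finset.sum_sub_distrib, Finset.mul_sum]
  exact Finset.sum_congr rfl fun k _ ↦ by ring

theorem ehrenfestGenerator_choose_zero (p : ℝ) (L x : ℕ) :
    ehrenfestGenerator p L (fun x ↦ x.choose 0) x = 0 := by
  simp [ehrenfestGenerator]

theorem ehrenfestGenerator_choose_succ (p : ℝ) (L k x : ℕ) :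
    ehrenfestGenerator p L (fun x ↦ x.choose (k + 1)) x =
      p * (L - k) * x.choose k - (k + 1) * x.choose (k + 1) := by
  have hdown := cast_mul_choose_sub_choose_pred (R := ℝ) x (k + 1)
  have hup := cast_choose_succ_mul (R := ℝ) x k
  simp only [ehrenfestGenerator, Nat.choose_succ_succ' x k]
  push_cast at *
  linear_combination -(1 - p) * hdown + p * hup

theorem ehrenfestGenerator_krawtchouk (hp : p ≠ 0) (hm : m ≤ L) (x : ℕ) :
    ehrenfestGenerator p L (krawtchouk p L m) x = -m * krawtchouk p L m x := by
  have lower_terms : ∑ k ∈ Finset.range m,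
      krawtchoukCoeff p L m (k + 1) * (p * (L - k) * x.choose k) =
        -∑ k ∈ Finset.range m, (m - k) * (krawtchoukCoeff p L m k * x.choose k) := by
    rw [← Finset.sum_neg_distrib]
    refine Finset.sum_congr rfl fun k hk ↦ ?_
    have hkL : k < L := (Finset.mem_range.mp hk).trans_le hm
    linear_combination (x.choose k : ℝ) * krawtchoukCoeff_succ (m := m) hp hkL
  calc ehrenfestGenerator p L (krawtchouk p L m) x
      = ∑ k ∈ Finset.range (m + 1),
          krawtchoukCoeff p L m k * ehrenfestGenerator p L (fun x ↦ x.choose k) x := by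
        rw [← ehrenfestGenerator_sum, funext (krawtchouk_eq_sum_coeff p L m)]
    _ = ∑ k ∈ Finset.range m, krawtchoukCoeff p L m (k + 1) * (p * (L - k) * x.choose k) -
          ∑ k ∈ Finset.range (m + 1), k * (krawtchoukCoeff p L m k * x.choose k) := by
        rw [Finset.sum_range_succ', Finset.sum_range_succ' (fun k : ℕ ↦ (k : ℝ) * _)]
        simp only [ehrenfestGenerator_choose_zero, ehrenfestGenerator_choose_succ, mul_sub,
          Finset.sum_sub_distrib]
        push_cast
        simp only [mul_left_comm (krawtchoukCoeff p L m _)]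
        ring
    _ = -∑ k ∈ Finset.range (m + 1), (m : ℝ) * (krawtchoukCoeff p L m k * x.choose k) := by
        rw [lower_terms, Finset.sum_range_succ, Finset.sum_range_succ]
        simp only [sub_mul, Finset.sum_sub_distrib]
        ring
    _ = -m * krawtchouk p L m x := by
        rw [krawtchouk_eq_sum_coeff, ← Finset.mul_sum, neg_mul]

end DifferenceEquation

section JacobiRecurrence

variable {p : ℝ} {L m x : ℕ}

/-- The binomial weight `W_{p,L}(x)`. -/
def binomialWeight (p : ℝ) (L x : ℕ) : ℝ :=
  L.choose x * p ^ x * (1 - p) ^ (L - x)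

theorem binomialWeight_detailed_balance (p : ℝ) (hx : x ≤ L) :
    (1 - p) * (x + 1) * binomialWeight p L (x + 1) = p * (L - x) * binomialWeight p L x := by
  rcases hx.lt_or_eq with hx | rfl
  · rw [binomialWeight, binomialWeight, show L - x = L - (x + 1) + 1 by omega]
    linear_combination (p ^ (x + 1) * (1 - p) ^ (L - (x + 1) + 1)) *
      cast_choose_succ_mul (R := ℝ) L x
  · simp [binomialWeight]

/-- The diagonal entries of the Jacobi matrix of the functions `x ↦ K̃_m(x;p,L)`. -/
def krawtchoukDiag (p : ℝ) (L x : ℕ) : ℝ :=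
  p * (L - x) + (1 - p) * x

/-- The negated off-diagonal entries of the Jacobi matrix of the functions `x ↦ K̃_m(x;p,L)`: the
entry coupling `x - 1` and `x`. It vanishes at `x = 0` and `x = L + 1`. -/
def krawtchoukOffDiag (p : ℝ) (L x : ℕ) : ℝ :=
  √((1 - p) * x * (p * (L + 1 - x)))

theorem krawtchoukOffDiag_zero (p : ℝ) (L : ℕ) : krawtchoukOffDiag p L 0 = 0 := by
  simp [krawtchoukOffDiag]

theorem krawtchoukOffDiag_last (p : ℝ) (L : ℕ) : krawtchoukOffDiag p L (L + 1) = 0 := by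
  simp [krawtchoukOffDiag]

theorem krawtchoukOffDiag_succ_pos (hp : p ∈ Set.Ioo 0 1) (hx : x < L) :
    0 < krawtchoukOffDiag p L (x + 1) := by
  have hq : 0 < 1 - p := sub_pos.mpr hp.2
  have hxL : (0 : ℝ) < L - x := sub_pos.mpr (Nat.cast_lt.mpr hx)
  rw [krawtchoukOffDiag, Nat.cast_succ, add_sub_add_right_eq_sub]
  exact Real.sqrt_pos.mpr (mul_pos (mul_pos hq (by positivity)) (mul_pos hp.1 hxL))

theorem sqrt_mul_mul_sqrt_of_mul_eq_mul {α β v w : ℝ} (hα : 0 ≤ α) (hβ : 0 ≤ β)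
    (h : α * v = β * w) : √(α * β) * √v = β * √w := by
  rw [← Real.sqrt_mul (mul_nonneg hα hβ), show α * β * v = β ^ 2 * w by linear_combination β * h,
    Real.sqrt_mul (sq_nonneg β), Real.sqrt_sq hβ]

theorem krawtchoukOffDiag_mul_sqrt_binomialWeight_succ (hp : p ∈ Set.Icc 0 1) (hx : x ≤ L) :
    krawtchoukOffDiag p L (x + 1) * √(binomialWeight p L (x + 1)) =
      p * (L - x) * √(binomialWeight p L x) := by
  have hdeath : 0 ≤ (1 - p) * (x + 1) := mul_nonneg (sub_nonneg.mpr hp.2) (by positivity)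
  have hbirth : 0 ≤ p * (L - x) := mul_nonneg hp.1 (sub_nonneg.mpr (Nat.cast_le.mpr hx))
  rw [krawtchoukOffDiag, Nat.cast_succ, add_sub_add_right_eq_sub]
  exact sqrt_mul_mul_sqrt_of_mul_eq_mul hdeath hbirth (binomialWeight_detailed_balance p hx)

theorem krawtchoukOffDiag_mul_sqrt_binomialWeight_pred (hp : p ∈ Set.Icc 0 1) (hx : x ≤ L) :
    krawtchoukOffDiag p L x * √(binomialWeight p L (x - 1)) =
      (1 - p) * x * √(binomialWeight p L x) := by
  rcases x with _ | x
  · simp [krawtchoukOffDiag_zero]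
  have hxL : x ≤ L := x.le_succ.trans hx
  have hdeath : 0 ≤ (1 - p) * (x + 1) := mul_nonneg (sub_nonneg.mpr hp.2) (by positivity)
  have hbirth : 0 ≤ p * (L - x) := mul_nonneg hp.1 (sub_nonneg.mpr (Nat.cast_le.mpr hxL))
  rw [krawtchoukOffDiag, Nat.cast_succ, add_sub_add_right_eq_sub, Nat.add_sub_cancel,
    mul_comm ((1 - p) * _)]
  exact sqrt_mul_mul_sqrt_of_mul_eq_mul hbirth hdeath (binomialWeight_detailed_balance p hxL).symm

theorem normalizedKrawtchouk_eq (p : ℝ) (L m x : ℕ) :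
    normalizedKrawtchouk p L m x =
      √(binomialWeight p L x) * (√(L.choose m) * √((p / (1 - p)) ^ m)) * krawtchouk p L m x := by
  rw [normalizedKrawtchouk, binomialWeight, mul_assoc √_ √_]

theorem normalizedKrawtchouk_recurrence (hp : p ∈ Set.Ioc 0 1) (hm : m ≤ L) (hx : x ≤ L) :
    m * normalizedKrawtchouk p L m x =
      krawtchoukDiag p L x * normalizedKrawtchouk p L m x -
        krawtchoukOffDiag p L (x + 1) * normalizedKrawtchouk p L m (x + 1) -
        krawtchoukOffDiag p L x * normalizedKrawtchouk p L m (x - 1) := by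
  have hpIcc : p ∈ Set.Icc 0 1 := Set.Ioc_subset_Icc_self hp
  have heigen := ehrenfestGenerator_krawtchouk hp.1.ne' hm x
  have hsucc := krawtchoukOffDiag_mul_sqrt_binomialWeight_succ hpIcc hx
  have hpred := krawtchoukOffDiag_mul_sqrt_binomialWeight_pred hpIcc hx
  simp only [normalizedKrawtchouk_eq, ehrenfestGenerator, krawtchoukDiag] at *
  generalize √(L.choose m : ℝ) * √((p / (1 - p)) ^ m) = c
  linear_combination (√(binomialWeight p L x) * c) * heigen +
    (c * krawtchouk p L m (x + 1)) * hsucc + (c * krawtchouk p L m (x - 1)) * hpred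

end JacobiRecurrence

section Orthonormality

variable {p : ℝ} {L : ℕ}

theorem krawtchoukCoeff_mul_choose_mul_pow (hp : p ≠ 0) {x k : ℕ} (hk : k ≤ L) :
    krawtchoukCoeff p L x k * (L.choose k * p ^ k) = (-1) ^ k * x.choose k := by
  rw [krawtchoukCoeff, Nat.cast_choose ℝ hk]
  field_simp

theorem sum_binomialWeight_mul_krawtchouk (hp : p ≠ 0) {x : ℕ} (hx : x ≤ L) :
    ∑ m ∈ Finset.range (L + 1), binomialWeight p L m * krawtchouk p L m x =
      if x = 0 then 1 else 0 := by
  calc ∑ m ∈ Finset.range (L + 1), binomialWeight p L m * krawtchouk p L m x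
      = ∑ k ∈ Finset.range (x + 1), krawtchoukCoeff p L x k *
          ∑ m ∈ Finset.range (L + 1), binomialWeight p L m * m.choose k := by
        simp only [krawtchouk_comm p L _ x, krawtchouk_eq_sum_coeff, Finset.mul_sum]
        rw [Finset.sum_comm]
        exact Finset.sum_congr rfl fun k _ ↦ Finset.sum_congr rfl fun m _ ↦ by ring
    _ = ∑ k ∈ Finset.range (x + 1), (-1) ^ k * (x.choose k : ℝ) := by
        refine Finset.sum_congr rfl fun k hk ↦ ?_
        have hkL : k ≤ L := (Finset.mem_range_succ_iff.mp hk).trans hx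
        rw [← krawtchoukCoeff_mul_choose_mul_pow hp hkL]
        simp only [binomialWeight]
        rw [sum_range_choose_mul_choose_mul_pow p (1 - p) hkL]
        simp
    _ = if x = 0 then 1 else 0 := by exact_mod_cast Int.alternating_sum_range_choose (n := x)

theorem normalizedKrawtchouk_zero_mul (hp : p ∈ Set.Ioo 0 1) {m : ℕ} (hm : m ≤ L) (x : ℕ) :
    normalizedKrawtchouk p L m 0 * normalizedKrawtchouk p L m x =
      √(binomialWeight p L 0) * √(binomialWeight p L x) / (1 - p) ^ L *
        (binomialWeight p L m * krawtchouk p L m x) := by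
  have hq : 0 < 1 - p := sub_pos.mpr hp.2
  have hratio : 0 ≤ (p / (1 - p)) ^ m := pow_nonneg (div_nonneg hp.1.le hq.le) m
  have hweight : binomialWeight p L m = (1 - p) ^ L * (L.choose m * (p / (1 - p)) ^ m) := by
    rw [binomialWeight, ← Nat.sub_add_cancel hm, Nat.add_sub_cancel, div_pow, pow_add]
    field_simp
  have hone : krawtchouk p L m 0 = 1 := by
    have hL : (L ! : ℝ) ≠ 0 := Nat.cast_ne_zero.mpr L.factorial_ne_zero
    rw [krawtchouk_comm]
    simp [krawtchouk, div_self hL]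
  rw [normalizedKrawtchouk_eq, normalizedKrawtchouk_eq, hone, hweight]
  field_simp
  rw [Real.sq_sqrt (Nat.cast_nonneg _), Real.sq_sqrt hratio]
  ring

theorem sum_normalizedKrawtchouk_zero_mul (hp : p ∈ Set.Ioo 0 1) {x : ℕ} (hx : x ≤ L) :
    ∑ m ∈ Finset.range (L + 1), normalizedKrawtchouk p L m 0 * normalizedKrawtchouk p L m x =
      if 0 = x then 1 else 0 := by
  have hq : 0 < 1 - p := sub_pos.mpr hp.2
  rw [Finset.sum_congr rfl fun m hm ↦
      normalizedKrawtchouk_zero_mul hp (Finset.mem_range_succ_iff.mp hm) x,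
    ← Finset.mul_sum, sum_binomialWeight_mul_krawtchouk hp.1.ne' hx]
  rcases x.eq_zero_or_pos with rfl | hx_pos
  · have hweight : binomialWeight p L 0 = (1 - p) ^ L := by simp [binomialWeight]
    rw [hweight, Real.mul_self_sqrt (pow_nonneg hq.le L), div_self (pow_pos hq L).ne', one_mul]
  · rw [if_neg hx_pos.ne', if_neg hx_pos.ne, mul_zero]

-- `e₀` is a cyclic vector of `J`, so a matrix commuting with `J` is determined by its first row.
theorem eq_ite_of_commute_jacobi {R : Type*} [CommRing R] [NoZeroDivisors R] {a b : ℕ → R}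
    {S : ℕ → ℕ → R} (hb_zero : b 0 = 0) (hb_last : b (L + 1) = 0)
    (hb_ne : ∀ x < L, b (x + 1) ≠ 0)
    (hcomm : ∀ x ≤ L, ∀ y ≤ L,
      a x * S x y - b (x + 1) * S (x + 1) y - b x * S (x - 1) y =
        a y * S x y - b (y + 1) * S x (y + 1) - b y * S x (y - 1))
    (hrow : ∀ y ≤ L, S 0 y = if 0 = y then 1 else 0) {x y : ℕ} (hx : x ≤ L) (hy : y ≤ L) :
    S x y = if x = y then 1 else 0 := by
  induction x using Nat.strong_induction_on generalizing y with
  | _ x ih =>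
    rcases x with _ | x
    · exact hrow y hy
    have row : ∀ y ≤ L, S x y = if x = y then 1 else 0 := fun y hy ↦
      ih x x.lt_succ_self (by omega) hy
    have prev_row : b x * S (x - 1) y = if x = y + 1 then b x else 0 := by
      rcases x with _ | x
      · simp [hb_zero]
      · rw [Nat.add_sub_cancel, ih x (by omega) (by omega) hy]
        simp
    have row_succ : b (y + 1) * S x (y + 1) = if x = y + 1 then b x else 0 := by
      rcases hy.lt_or_eq with hy | rfl
      · rw [row (y + 1) hy]
        split_ifs with h <;> simp [h]
      · rw [hb_last, zero_mul, if_neg (by omega)]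
    have row_pred : b y * S x (y - 1) = b (x + 1) * if x + 1 = y then 1 else 0 := by
      rcases y with _ | y
      · simp [hb_zero]
      · rw [Nat.add_sub_cancel, row y (by omega)]
        split_ifs with h₁ h₂ h₂ <;> first | omega | simp [h₁]
    have diag : a x * S x y = a y * S x y := by
      rw [row y hy]
      split_ifs with h <;> simp [h]
    refine mul_left_cancel₀ (hb_ne x hx) ?_
    linear_combination -hcomm x (by omega) y hy + diag - prev_row + row_succ + row_pred

theorem sum_mul_normalizedKrawtchouk_mul (hp : p ∈ Set.Ioc 0 1) {x : ℕ} (hx : x ≤ L)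
    (g : ℕ → ℝ) :
    ∑ m ∈ Finset.range (L + 1), m * (normalizedKrawtchouk p L m x * g m) =
      krawtchoukDiag p L x * ∑ m ∈ Finset.range (L + 1), normalizedKrawtchouk p L m x * g m -
        krawtchoukOffDiag p L (x + 1) *
          ∑ m ∈ Finset.range (L + 1), normalizedKrawtchouk p L m (x + 1) * g m -
        krawtchoukOffDiag p L x *
          ∑ m ∈ Finset.range (L + 1), normalizedKrawtchouk p L m (x - 1) * g m := by
  simp only [Finset.mul_sum, ← Finset.sum_sub_distrib]
  refine Finset.sum_congr rfl fun m hm ↦ ?_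
  linear_combination
    g m * normalizedKrawtchouk_recurrence hp (Finset.mem_range_succ_iff.mp hm) hx

theorem normalizedKrawtchouk_orthonormal (hp : p ∈ Set.Ioo 0 1) {x y : ℕ} (hx : x ≤ L)
    (hy : y ≤ L) :
    ∑ m ∈ Finset.range (L + 1), normalizedKrawtchouk p L m x * normalizedKrawtchouk p L m y =
      if x = y then 1 else 0 := by
  have hpIoc : p ∈ Set.Ioc 0 1 := Set.Ioo_subset_Ioc_self hp
  refine eq_ite_of_commute_jacobi (a := krawtchoukDiag p L)
    (S := fun x y ↦ ∑ m ∈ Finset.range (L + 1),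
      normalizedKrawtchouk p L m x * normalizedKrawtchouk p L m y)
    (krawtchoukOffDiag_zero p L) (krawtchoukOffDiag_last p L)
    (fun x hx ↦ (krawtchoukOffDiag_succ_pos hp hx).ne') (fun x hx y hy ↦ ?_)
    (fun _ ↦ sum_normalizedKrawtchouk_zero_mul hp) hx hy
  have left_action := sum_mul_normalizedKrawtchouk_mul hpIoc hx (normalizedKrawtchouk p L · y)
  have right_action := sum_mul_normalizedKrawtchouk_mul hpIoc hy (normalizedKrawtchouk p L · x)
  simp only [mul_comm (normalizedKrawtchouk p L _ _) (normalizedKrawtchouk p L _ x)]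
    at left_action right_action
  exact left_action.symm.trans right_action

end Orthonormality

section ToeplitzJacobi

open scoped Real

/-- The `(u, v)` entry of `f(J)`, where `J` is the bi-infinite Jacobi matrix with constant diagonal
`A` and constant off-diagonal `-B`, expressed as a Fourier coefficient of `f` composed with the
symbol `A - 2 * B * cos θ`. -/
def toeplitzEntry (A B : ℝ) (u v : ℤ) (f : ℝ → ℝ) : ℝ :=
  π⁻¹ * ∫ θ in (0 : ℝ)..π, f (A - 2 * B * Real.cos θ) * Real.cos ((u - v) * θ)

/-- The discrete sine kernel with density `ω / π`. -/
def discreteSineKernel (ω : ℝ) (u v : ℤ) : ℝ :=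
  if u = v then ω / π else Real.sin (ω * (u - v)) / (π * (u - v))

variable {A B : ℝ} {u v : ℤ} {f g h : ℝ → ℝ}

theorem toeplitzEntry_self (A B : ℝ) (u : ℤ) (f : ℝ → ℝ) :
    toeplitzEntry A B u u f = π⁻¹ * ∫ θ in (0 : ℝ)..π, f (A - 2 * B * Real.cos θ) := by
  simp [toeplitzEntry]

theorem toeplitzEntry_const_self (A B : ℝ) (u : ℤ) (r : ℝ) :
    toeplitzEntry A B u u (fun _ ↦ r) = r := by
  simp [toeplitzEntry_self, Real.pi_ne_zero]

theorem toeplitzEntry_one (A B : ℝ) (u v : ℤ) :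
    toeplitzEntry A B u v (fun _ ↦ 1) = if u = v then 1 else 0 := by
  split_ifs with huv
  · rw [huv, toeplitzEntry_const_self]
  · have hd : ((u : ℝ) - v) ≠ 0 := sub_ne_zero.mpr (Int.cast_injective.ne huv)
    have hsin : Real.sin ((u - v) * π) = 0 := by exact_mod_cast Real.sin_int_mul_pi (u - v)
    simp only [toeplitzEntry, one_mul]
    rw [intervalIntegral.integral_comp_mul_left Real.cos hd]
    simp [hsin]

theorem toeplitzEntry_add (hf : Continuous f) (hg : Continuous g) :
    toeplitzEntry A B u v (fun y ↦ f y + g y) =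
      toeplitzEntry A B u v f + toeplitzEntry A B u v g := by
  simp only [toeplitzEntry, add_mul]
  rw [← mul_add, ← intervalIntegral.integral_add] <;>
    exact Continuous.intervalIntegrable (by fun_prop) _ _

theorem toeplitzEntry_const_mul (A B : ℝ) (u v : ℤ) (r : ℝ) (f : ℝ → ℝ) :
    toeplitzEntry A B u v (fun y ↦ r * f y) = r * toeplitzEntry A B u v f := by
  simp only [toeplitzEntry, mul_assoc, intervalIntegral.integral_const_mul]
  ring

theorem toeplitzEntry_id_mul (hf : Continuous f) :
    toeplitzEntry A B u v (fun y ↦ y * f y) =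
      A * toeplitzEntry A B u v f - B * toeplitzEntry A B (u + 1) v f -
        B * toeplitzEntry A B (u - 1) v f := by
  have product_to_sum (θ : ℝ) :
      (A - 2 * B * Real.cos θ) * f (A - 2 * B * Real.cos θ) * Real.cos ((u - v) * θ) =
        A * (f (A - 2 * B * Real.cos θ) * Real.cos ((u - v) * θ)) -
          B * (f (A - 2 * B * Real.cos θ) * Real.cos (((u + 1 : ℤ) - v) * θ)) -
          B * (f (A - 2 * B * Real.cos θ) * Real.cos (((u - 1 : ℤ) - v) * θ)) := by
    push_cast
    rw [show (u + 1 - v) * θ = (u - v) * θ + θ by ring,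
      show (u - 1 - v) * θ = (u - v) * θ - θ by ring, Real.cos_add, Real.cos_sub]
    ring
  simp only [toeplitzEntry, product_to_sum]
  rw [intervalIntegral.integral_sub, intervalIntegral.integral_sub]
  · simp only [intervalIntegral.integral_const_mul]
    ring
  all_goals exact Continuous.intervalIntegrable (by fun_prop) _ _

theorem abs_toeplitzEntry_sub_le
    (hf : IntervalIntegrable (fun θ ↦ f (A - 2 * B * Real.cos θ)) MeasureTheory.volume 0 π)
    (hg : IntervalIntegrable (fun θ ↦ g (A - 2 * B * Real.cos θ)) MeasureTheory.volume 0 π)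
    (hh : IntervalIntegrable (fun θ ↦ h (A - 2 * B * Real.cos θ)) MeasureTheory.volume 0 π)
    (hfg : ∀ θ, |f (A - 2 * B * Real.cos θ) - g (A - 2 * B * Real.cos θ)| ≤
      h (A - 2 * B * Real.cos θ)) (w : ℤ) :
    |toeplitzEntry A B u v f - toeplitzEntry A B u v g| ≤ toeplitzEntry A B w w h := by
  have hcos : ContinuousOn (fun θ ↦ Real.cos ((u - v) * θ)) (Set.uIcc 0 π) :=
    Continuous.continuousOn (by fun_prop)
  rw [toeplitzEntry_self, toeplitzEntry, toeplitzEntry, ← mul_sub, ← intervalIntegral.integral_sub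
    (hf.mul_continuousOn hcos) (hg.mul_continuousOn hcos), abs_mul,
    abs_of_pos (inv_pos.mpr Real.pi_pos)]
  refine mul_le_mul_of_nonneg_left ?_ (inv_pos.mpr Real.pi_pos).le
  rw [← Real.norm_eq_abs]
  refine intervalIntegral.norm_integral_le_of_norm_le Real.pi_pos.le
    (Eventually.of_forall fun θ _ ↦ ?_) hh
  rw [← sub_mul, norm_mul]
  exact (mul_le_of_le_one_right (norm_nonneg _) (Real.abs_cos_le_one _)).trans (hfg θ)

theorem lt_arccos_iff {θ τ : ℝ} (hθ : θ ∈ Set.Ico 0 π) : θ < Real.arccos τ ↔ τ < Real.cos θ := by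
  have harccos : Real.arccos (Real.cos θ) = θ := Real.arccos_cos hθ.1 hθ.2.le
  constructor
  · contrapose!
    exact fun hτ ↦ (Real.arccos_le_arccos hτ).trans harccos.le
  · intro hτ
    rcases le_or_gt (-1) τ with hτ_ge | hτ_lt
    · exact harccos.symm.trans_lt (Real.arccos_lt_arccos hτ_ge hτ (Real.cos_le_one θ))
    · exact (Real.arccos_of_le_neg_one hτ_lt.le).symm ▸ hθ.2

theorem toeplitzEntry_indicator_Iio (hB : 0 < B) (t : ℝ) (u v : ℤ) :
    toeplitzEntry A B u v ((Set.Iio t).indicator 1) =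
      discreteSineKernel (Real.arccos ((A - t) / (2 * B))) u v := by
  set ω := Real.arccos ((A - t) / (2 * B)) with hω
  have below_iff (θ : ℝ) : A - 2 * B * Real.cos θ < t ↔ (A - t) / (2 * B) < Real.cos θ := by
    rw [div_lt_iff₀ (by positivity)]
    constructor <;> intro <;> linarith
  have hintegral : ∫ θ in (0 : ℝ)..π,
      (Set.Iio t).indicator 1 (A - 2 * B * Real.cos θ) * Real.cos ((u - v) * θ) =
        ∫ θ in (0 : ℝ)..ω, Real.cos ((u - v) * θ) := by
    have hω_mem : ω ∈ Set.Icc 0 π := ⟨Real.arccos_nonneg _, Real.arccos_le_pi _⟩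
    rw [← intervalIntegral.integral_indicator hω_mem]
    refine intervalIntegral.integral_congr_ae ?_
    filter_upwards [MeasureTheory.volume.ae_ne ω, MeasureTheory.volume.ae_ne π] with θ hθω hθπ hθ
    rw [Set.uIoc_of_le Real.pi_pos.le] at hθ
    have hiff : θ ≤ ω ↔ A - 2 * B * Real.cos θ < t := by
      rw [below_iff, ← lt_arccos_iff ⟨hθ.1.le, hθ.2.lt_of_ne hθπ⟩, ← hω, hθω.le_iff_lt]
    simp [Set.indicator_apply, hiff]
  rw [toeplitzEntry, hintegral, discreteSineKernel]
  split_ifs with huv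
  · simp [huv, div_eq_inv_mul]
  · have hd : ((u : ℝ) - v) ≠ 0 := sub_ne_zero.mpr (Int.cast_injective.ne huv)
    rw [intervalIntegral.integral_comp_mul_left Real.cos hd, integral_cos, mul_zero, Real.sin_zero,
      sub_zero, smul_eq_mul, mul_comm ω]
    field_simp

end ToeplitzJacobi

section StepApproximation

open scoped Real

variable {A B t k : ℝ}

/-- The piecewise linear function equal to `1` below `t - 1 / k` and to `0` above `t`: a continuous
approximation to the indicator function of `Iio t`. -/
def ramp (t k y : ℝ) : ℝ :=
  max 0 (min 1 (k * (t - y)))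

/-- The piecewise linear bump of height `1` centred at `t` and of half-width `1 / k`. -/
def tent (t k y : ℝ) : ℝ :=
  max 0 (1 - k * |t - y|)

theorem continuous_ramp (t k : ℝ) : Continuous (ramp t k) := by
  unfold ramp
  fun_prop

theorem continuous_tent (t k : ℝ) : Continuous (tent t k) := by
  unfold tent
  fun_prop

theorem tent_mem_Icc (hk : 0 ≤ k) (t y : ℝ) : tent t k y ∈ Set.Icc 0 1 :=
  ⟨le_max_left _ _, max_le zero_le_one (sub_le_self 1 (mul_nonneg hk (abs_nonneg _)))⟩

theorem tendsto_tent_atTop {y : ℝ} (hy : y ≠ t) : Tendsto (tent t · y) atTop (𝓝 0) := by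
  have hdist : 0 < |t - y| := abs_pos.mpr (sub_ne_zero.mpr hy.symm)
  refine tendsto_const_nhds.congr' ?_
  filter_upwards [(tendsto_id.atTop_mul_const hdist).eventually_ge_atTop 1] with k hk
  exact (max_eq_left (sub_nonpos.mpr hk)).symm

theorem abs_indicator_Iio_sub_ramp_le_tent (hk : 0 ≤ k) (t y : ℝ) :
    |(Set.Iio t).indicator 1 y - ramp t k y| ≤ tent t k y := by
  rcases lt_or_ge y t with hy | hy
  · have hslope : 0 ≤ k * (t - y) := mul_nonneg hk (sub_nonneg.mpr hy.le)
    rw [Set.indicator_of_mem (Set.mem_Iio.mpr hy), ramp, tent, abs_of_pos (sub_pos.mpr hy),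
      max_eq_right (le_min zero_le_one hslope), Pi.one_apply,
      abs_of_nonneg (sub_nonneg.mpr (min_le_left _ _))]
    rcases le_total 1 (k * (t - y)) with h | h
    · simp [h]
    · simp [h]
  · have hslope : k * (t - y) ≤ 0 := mul_nonpos_of_nonneg_of_nonpos hk (sub_nonpos.mpr hy)
    rw [Set.indicator_of_notMem (Set.notMem_Iio.mpr hy), ramp,
      max_eq_left ((min_le_right _ _).trans hslope), sub_zero, abs_zero]
    exact (tent_mem_Icc hk t y).1

theorem ae_symbol_ne (hB : B ≠ 0) (A t : ℝ) :
    ∀ᵐ θ : ℝ, θ ∈ Set.uIoc 0 π → A - 2 * B * Real.cos θ ≠ t := by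
  filter_upwards [MeasureTheory.volume.ae_ne (Real.arccos ((A - t) / (2 * B)))] with θ hθ hmem ht
  rw [Set.uIoc_of_le Real.pi_pos.le] at hmem
  refine hθ (Real.arccos_eq_of_eq_cos hmem.1.le hmem.2 ?_).symm
  field_simp
  linarith

theorem tendsto_toeplitzEntry_tent (hB : B ≠ 0) (A t : ℝ) (u : ℤ) :
    Tendsto (fun k ↦ toeplitzEntry A B u u (tent t k)) atTop (𝓝 0) := by
  simp only [toeplitzEntry_self]
  suffices hintegral : Tendsto (fun k ↦ ∫ θ in (0 : ℝ)..π, tent t k (A - 2 * B * Real.cos θ)) atTop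
      (𝓝 (∫ _ in (0 : ℝ)..π, (0 : ℝ))) by
    simpa using hintegral.const_mul π⁻¹
  refine intervalIntegral.tendsto_integral_filter_of_dominated_convergence (fun _ ↦ 1)
    (Eventually.of_forall fun k ↦ ?_) ?_ intervalIntegrable_const ?_
  · have := continuous_tent t k
    exact Continuous.aestronglyMeasurable (by fun_prop)
  · filter_upwards [eventually_ge_atTop 0] with k hk
    refine Eventually.of_forall fun θ _ ↦ ?_
    have hmem := tent_mem_Icc hk t (A - 2 * B * Real.cos θ)
    rw [Real.norm_of_nonneg hmem.1]
    exact hmem.2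
  · filter_upwards [ae_symbol_ne hB A t] with θ hθ hmem
    exact tendsto_tent_atTop (hθ hmem)

theorem intervalIntegrable_indicator_Iio_symbol (A B t : ℝ) :
    IntervalIntegrable (fun θ ↦ (Set.Iio t).indicator (1 : ℝ → ℝ) (A - 2 * B * Real.cos θ))
      MeasureTheory.volume 0 π := by
  have hmeas : Measurable fun θ ↦ (Set.Iio t).indicator (1 : ℝ → ℝ) (A - 2 * B * Real.cos θ) :=
    (measurable_one.indicator measurableSet_Iio).comp (by fun_prop)
  refine (intervalIntegrable_const (c := (1 : ℝ))).mono_fun hmeas.aestronglyMeasurable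
    (Eventually.of_forall fun θ ↦ ?_)
  simpa using norm_indicator_le_norm_self (s := Set.Iio t) (1 : ℝ → ℝ) (A - 2 * B * Real.cos θ)

end StepApproximation

section SpectralConvergence

open scoped Real

variable {ι κ : Type*} {l : Filter ι} {s : ι → Finset κ} {x : ι → κ → ℝ} {ψ : ι → ℤ → κ → ℝ}
  {A B : ℝ} {f g h : ℝ → ℝ}

/-- The `(u, v)` entry of `f(J)` for the matrix `J` with eigenvalues `x m`, `m ∈ s`, and
eigenvectors `u ↦ ψ u m`. -/
def spectralEntry (s : Finset κ) (x : κ → ℝ) (ψ : ℤ → κ → ℝ) (u v : ℤ) (f : ℝ → ℝ) : ℝ :=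
  ∑ m ∈ s, ψ u m * ψ v m * f (x m)

theorem abs_spectralEntry_sub_le {s : Finset κ} {x : κ → ℝ} (ψ : ℤ → κ → ℝ) (u v : ℤ)
    (hfg : ∀ m ∈ s, |f (x m) - g (x m)| ≤ h (x m)) :
    |spectralEntry s x ψ u v f - spectralEntry s x ψ u v g| ≤
      (spectralEntry s x ψ u u h + spectralEntry s x ψ v v h) / 2 := by
  simp only [spectralEntry, ← Finset.sum_sub_distrib, ← Finset.sum_add_distrib, Finset.sum_div]
  refine (Finset.abs_sum_le_sum_abs _ _).trans (Finset.sum_le_sum fun m hm ↦ ?_)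
  have young : |ψ u m * ψ v m| ≤ (ψ u m * ψ u m + ψ v m * ψ v m) / 2 := by
    rw [abs_mul, ← abs_mul_abs_self (ψ u m), ← abs_mul_abs_self (ψ v m)]
    linarith [two_mul_le_add_sq |ψ u m| |ψ v m|]
  calc |ψ u m * ψ v m * f (x m) - ψ u m * ψ v m * g (x m)|
      = |ψ u m * ψ v m| * |f (x m) - g (x m)| := by rw [← mul_sub, abs_mul]
    _ ≤ (ψ u m * ψ u m + ψ v m * ψ v m) / 2 * h (x m) :=
      mul_le_mul young (hfg m hm) (abs_nonneg _) ((abs_nonneg _).trans young)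
    _ = (ψ u m * ψ u m * h (x m) + ψ v m * ψ v m * h (x m)) / 2 := by ring

/-- A family `J i` of Jacobi matrices with eigenvalues `x i m` and orthonormal eigenvectors
`u ↦ ψ i u m`, whose entries converge along `l` to the constant diagonal `A` and off-diagonal `-B`.
The rows are labelled by `ℤ`, and each is only required to exist eventually. -/
structure AsymptoticallyToeplitz (l : Filter ι) (s : ι → Finset κ) (x : ι → κ → ℝ)
    (ψ : ι → ℤ → κ → ℝ) (A B : ℝ) : Prop where
  bounded : ∃ R, ∀ᶠ i in l, ∀ m ∈ s i, |x i m| ≤ R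
  orthonormal : ∀ u v, ∀ᶠ i in l, ∑ m ∈ s i, ψ i u m * ψ i v m = if u = v then 1 else 0
  recurrence : ∃ a b : ι → ℤ → ℝ,
    (∀ u, Tendsto (a · u) l (𝓝 A)) ∧ (∀ u, Tendsto (b · u) l (𝓝 B)) ∧
    ∀ u, ∀ᶠ i in l, ∀ m ∈ s i,
      x i m * ψ i u m = a i u * ψ i u m - b i (u + 1) * ψ i (u + 1) m - b i u * ψ i (u - 1) m

/-- Entrywise convergence of `f(J i)` to `f` of the Toeplitz Jacobi matrix. -/
def EntriesTendsto (l : Filter ι) (s : ι → Finset κ) (x : ι → κ → ℝ) (ψ : ι → ℤ → κ → ℝ)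
    (A B : ℝ) (f : ℝ → ℝ) : Prop :=
  ∀ u v, Tendsto (fun i ↦ spectralEntry (s i) (x i) (ψ i) u v f) l (𝓝 (toeplitzEntry A B u v f))

theorem entriesTendsto_of_approx {R : ℝ} (hspec : ∀ᶠ i in l, ∀ m ∈ s i, |x i m| ≤ R)
    (hsymbol : ∀ θ, |A - 2 * B * Real.cos θ| ≤ R)
    (hg : IntervalIntegrable (fun θ ↦ g (A - 2 * B * Real.cos θ)) MeasureTheory.volume 0 π)
    (happrox : ∀ ε > 0, ∃ f h, Continuous f ∧ Continuous h ∧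
      EntriesTendsto l s x ψ A B f ∧ EntriesTendsto l s x ψ A B h ∧
      (∀ y, |y| ≤ R → |g y - f y| ≤ h y) ∧ toeplitzEntry A B 0 0 h < ε) :
    EntriesTendsto l s x ψ A B g := by
  intro u v
  rw [Metric.tendsto_nhds]
  intro ε hε
  obtain ⟨f, h, hf, hh, hf_tendsto, hh_tendsto, hgf, hh_small⟩ := happrox (ε / 3) (by positivity)
  have diag_small (w : ℤ) : ∀ᶠ i in l, spectralEntry (s i) (x i) (ψ i) w w h < ε / 3 :=
    (hh_tendsto w w).eventually_lt_const (by rwa [toeplitzEntry_self] at hh_small ⊢)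
  have limit_close : |toeplitzEntry A B u v g - toeplitzEntry A B u v f| < ε / 3 :=
    (abs_toeplitzEntry_sub_le hg (Continuous.intervalIntegrable (by fun_prop) _ _)
      (Continuous.intervalIntegrable (by fun_prop) _ _) (fun θ ↦ hgf _ (hsymbol θ)) 0).trans_lt
      hh_small
  filter_upwards [hspec, diag_small u, diag_small v,
    Metric.tendsto_nhds.mp (hf_tendsto u v) (ε / 3) (by positivity)] with i hi hu hv hclose
  have entry_close := abs_spectralEntry_sub_le (ψ i) u v fun m hm ↦ hgf _ (hi m hm)
  rw [Real.dist_eq] at hclose ⊢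
  rw [abs_lt] at *
  rw [abs_le] at entry_close
  constructor <;> linarith [entry_close.1, entry_close.2, hclose.1, hclose.2, limit_close.1,
    limit_close.2]

namespace AsymptoticallyToeplitz

theorem entriesTendsto_pow (H : AsymptoticallyToeplitz l s x ψ A B) (k : ℕ) :
    EntriesTendsto l s x ψ A B (· ^ k) := by
  induction k with
  | zero =>
    intro u v
    simp only [pow_zero, toeplitzEntry_one]
    refine tendsto_const_nhds.congr' ?_
    filter_upwards [H.orthonormal u v] with i hi
    simp only [spectralEntry, mul_one, hi]
  | succ k ih =>
    intro u v
    obtain ⟨a, b, ha, hb, hrec⟩ := H.recurrence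
    simp only [pow_succ']
    rw [toeplitzEntry_id_mul (continuous_pow k)]
    refine ((((ha u).mul (ih u v)).sub ((hb (u + 1)).mul (ih (u + 1) v))).sub
      ((hb u).mul (ih (u - 1) v))).congr' ?_
    filter_upwards [hrec u] with i hi
    simp only [spectralEntry, Finset.mul_sum, ← Finset.sum_sub_distrib]
    refine Finset.sum_congr rfl fun m hm ↦ ?_
    linear_combination -(ψ i v m * x i m ^ k) * hi m hm

theorem entriesTendsto_polynomial (H : AsymptoticallyToeplitz l s x ψ A B)
    (P : Polynomial ℝ) :
    EntriesTendsto l s x ψ A B (P.eval ·) := by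
  intro u v
  induction P using Polynomial.induction_on' with
  | add P Q hP hQ =>
    simp only [Polynomial.eval_add]
    rw [toeplitzEntry_add P.continuous Q.continuous]
    refine (hP.add hQ).congr fun i ↦ ?_
    simp only [spectralEntry, mul_add, Finset.sum_add_distrib]
  | monomial n r =>
    simp only [Polynomial.eval_monomial]
    rw [toeplitzEntry_const_mul]
    refine ((H.entriesTendsto_pow n u v).const_mul r).congr fun i ↦ ?_
    simp only [spectralEntry, Finset.mul_sum, mul_left_comm r]

theorem exists_spectral_bound (H : AsymptoticallyToeplitz l s x ψ A B) :
    ∃ R, (∀ᶠ i in l, ∀ m ∈ s i, |x i m| ≤ R) ∧ ∀ θ, |A - 2 * B * Real.cos θ| ≤ R := by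
  obtain ⟨R, hR⟩ := H.bounded
  refine ⟨max R (|A| + |2 * B|), hR.mono fun i hi m hm ↦ (hi m hm).trans (le_max_left _ _),
    fun θ ↦ le_max_of_le_right ((abs_sub _ _).trans ?_)⟩
  rw [abs_mul (2 * B)]
  gcongr
  exact mul_le_of_le_one_right (abs_nonneg _) (Real.abs_cos_le_one θ)

theorem entriesTendsto_of_continuous (H : AsymptoticallyToeplitz l s x ψ A B)
    (hf : Continuous f) : EntriesTendsto l s x ψ A B f := by
  obtain ⟨R, hspec, hsymbol⟩ := H.exists_spectral_bound
  refine entriesTendsto_of_approx hspec hsymbol (Continuous.intervalIntegrable (by fun_prop) _ _)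
    fun ε hε ↦ ?_
  obtain ⟨P, hP⟩ := exists_polynomial_near_of_continuousOn (-R) R f hf.continuousOn (ε / 2)
    (half_pos hε)
  refine ⟨(P.eval ·), fun _ ↦ ε / 2, P.continuous, continuous_const,
    H.entriesTendsto_polynomial P, ?_, fun y hy ↦ ?_, ?_⟩
  · simpa using H.entriesTendsto_polynomial (Polynomial.C (ε / 2))
  · rw [abs_sub_comm]
    exact (hP y (abs_le.mp hy)).le
  · rw [toeplitzEntry_const_self]
    exact half_lt_self hε

theorem entriesTendsto_indicator_Iio (H : AsymptoticallyToeplitz l s x ψ A B)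
    (hB : B ≠ 0) (t : ℝ) :
    EntriesTendsto l s x ψ A B ((Set.Iio t).indicator 1) := by
  obtain ⟨R, hspec, hsymbol⟩ := H.exists_spectral_bound
  refine entriesTendsto_of_approx hspec hsymbol (intervalIntegrable_indicator_Iio_symbol A B t)
    fun ε hε ↦ ?_
  obtain ⟨k, hk_small, hk⟩ := ((tendsto_toeplitzEntry_tent hB A t 0).eventually_lt_const hε |>.and
    (eventually_ge_atTop 0)).exists
  exact ⟨ramp t k, tent t k, continuous_ramp t k, continuous_tent t k,
    H.entriesTendsto_of_continuous (continuous_ramp t k),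
    H.entriesTendsto_of_continuous (continuous_tent t k),
    fun y _ ↦ abs_indicator_Iio_sub_ramp_le_tent hk t y, hk_small⟩

theorem tendsto_sum_filter_lt (H : AsymptoticallyToeplitz l s x ψ A B) (hB : 0 < B)
    (t : ℝ) (u v : ℤ) :
    Tendsto (fun i ↦ ∑ m ∈ s i with x i m < t, ψ i u m * ψ i v m) l
      (𝓝 (discreteSineKernel (Real.arccos ((A - t) / (2 * B))) u v)) := by
  rw [← toeplitzEntry_indicator_Iio hB]
  refine (H.entriesTendsto_indicator_Iio hB.ne' t u v).congr fun i ↦ ?_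
  simp [spectralEntry, Finset.sum_filter, Set.indicator_apply]

end AsymptoticallyToeplitz

end SpectralConvergence

section Rescaling

theorem tendsto_add_const_div {f : ℕ → ℝ} {ξ : ℝ} (hf : Tendsto (fun N ↦ f N / N) atTop (𝓝 ξ))
    (r : ℝ) : Tendsto (fun N ↦ (f N + r) / N) atTop (𝓝 ξ) := by
  simpa only [add_div, add_zero] using hf.add (tendsto_const_div_atTop_nhds_zero_nat r)

theorem eventually_lt_of_tendsto_div {f g : ℕ → ℝ} {ξ η : ℝ}
    (hf : Tendsto (fun N ↦ f N / N) atTop (𝓝 ξ)) (hg : Tendsto (fun N ↦ g N / N) atTop (𝓝 η))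
    (hξη : ξ < η) : ∀ᶠ N in atTop, f N < g N := by
  filter_upwards [hf.eventually_lt hg hξη, eventually_gt_atTop 0] with N hN hpos
  exact (div_lt_div_iff_of_pos_right (Nat.cast_pos.mpr hpos)).mp hN

variable {L : ℕ → ℕ} {y : ℕ → ℤ} {ξ ℓ : ℝ}

theorem eventually_pos_and_lt_of_tendsto_div
    (hL : Tendsto (fun N ↦ (L N : ℝ) / N) atTop (𝓝 ℓ))
    (hy : Tendsto (fun N ↦ (y N : ℝ) / N) atTop (𝓝 ξ)) (hξ : ξ ∈ Set.Ioo 0 ℓ) (u : ℤ) :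
    ∀ᶠ N in atTop, 0 < y N + u ∧ y N + u < L N := by
  have hyu := tendsto_add_const_div hy u
  have hzero : Tendsto (fun N : ℕ ↦ (0 : ℝ) / N) atTop (𝓝 0) := by simp
  filter_upwards [eventually_lt_of_tendsto_div hzero hyu hξ.1,
    eventually_lt_of_tendsto_div hyu hL hξ.2] with N hpos hlt
  exact ⟨by exact_mod_cast hpos, by exact_mod_cast hlt⟩

theorem tendsto_toNat_add_div (hy : Tendsto (fun N ↦ (y N : ℝ) / N) atTop (𝓝 ξ)) (hξ : 0 ≤ ξ)
    (u : ℤ) : Tendsto (fun N ↦ ((y N + u).toNat : ℝ) / N) atTop (𝓝 ξ) := by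
  have hmax : Tendsto (fun N ↦ max (((y N : ℝ) + u) / N) 0) atTop (𝓝 (max ξ 0)) :=
    (tendsto_add_const_div hy u).max tendsto_const_nhds
  rw [max_eq_left hξ] at hmax
  refine hmax.congr fun N ↦ ?_
  have hcast : ((y N + u).toNat : ℝ) = max ((y N : ℝ) + u) 0 := by
    exact_mod_cast congrArg (Int.cast (R := ℝ)) (Int.toNat_eq_max (y N + u))
  rw [hcast, ← max_div_div_right (Nat.cast_nonneg N), zero_div]

variable {p : ℝ} {x : ℕ → ℕ}

theorem tendsto_krawtchoukDiag_div (p : ℝ) (hL : Tendsto (fun N ↦ (L N : ℝ) / N) atTop (𝓝 ℓ))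
    (hx : Tendsto (fun N ↦ (x N : ℝ) / N) atTop (𝓝 ξ)) :
    Tendsto (fun N ↦ krawtchoukDiag p (L N) (x N) / N) atTop
      (𝓝 (p * (ℓ - ξ) + (1 - p) * ξ)) := by
  refine (((hL.sub hx).const_mul p).add (hx.const_mul (1 - p))).congr fun N ↦ ?_
  rw [krawtchoukDiag]
  ring

theorem tendsto_krawtchoukOffDiag_div (p : ℝ)
    (hL : Tendsto (fun N ↦ (L N : ℝ) / N) atTop (𝓝 ℓ))
    (hx : Tendsto (fun N ↦ (x N : ℝ) / N) atTop (𝓝 ξ)) :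
    Tendsto (fun N ↦ krawtchoukOffDiag p (L N) (x N) / N) atTop
      (𝓝 √((1 - p) * ξ * (p * (ℓ - ξ)))) := by
  refine ((hx.const_mul (1 - p)).mul
    (((tendsto_add_const_div hL 1).sub hx).const_mul p)).sqrt.congr fun N ↦ ?_
  rw [krawtchoukOffDiag, eq_comm, ← Real.sqrt_sq (Nat.cast_nonneg N),
    ← Real.sqrt_div' _ (sq_nonneg _), Real.sqrt_sq (Nat.cast_nonneg N)]
  congr 1
  ring

end Rescaling

section BulkLimit

variable {p ξ ℓ : ℝ} {L : ℕ → ℕ} {y : ℕ → ℤ}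

theorem eventually_normalizedKrawtchouk_orthonormal (hp : p ∈ Set.Ioo 0 1)
    (hL : Tendsto (fun N ↦ (L N : ℝ) / N) atTop (𝓝 ℓ))
    (hy : Tendsto (fun N ↦ (y N : ℝ) / N) atTop (𝓝 ξ)) (hξ : ξ ∈ Set.Ioo 0 ℓ) (u v : ℤ) :
    ∀ᶠ N in atTop, ∑ m ∈ Finset.range (L N + 1), normalizedKrawtchouk p (L N) m (y N + u).toNat *
      normalizedKrawtchouk p (L N) m (y N + v).toNat = if u = v then 1 else 0 := by
  filter_upwards [eventually_pos_and_lt_of_tendsto_div hL hy hξ u,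
    eventually_pos_and_lt_of_tendsto_div hL hy hξ v] with N hu hv
  rw [normalizedKrawtchouk_orthonormal hp (by omega) (by omega)]
  exact if_congr (by omega) rfl rfl

theorem eventually_normalizedKrawtchouk_recurrence (hp : p ∈ Set.Ioc 0 1)
    (hL : Tendsto (fun N ↦ (L N : ℝ) / N) atTop (𝓝 ℓ))
    (hy : Tendsto (fun N ↦ (y N : ℝ) / N) atTop (𝓝 ξ)) (hξ : ξ ∈ Set.Ioo 0 ℓ) (u : ℤ) :
    ∀ᶠ N in atTop, ∀ m ∈ Finset.range (L N + 1),
      (m / N : ℝ) * normalizedKrawtchouk p (L N) m (y N + u).toNat =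
        krawtchoukDiag p (L N) (y N + u).toNat / N *
          normalizedKrawtchouk p (L N) m (y N + u).toNat -
        krawtchoukOffDiag p (L N) (y N + (u + 1)).toNat / N *
          normalizedKrawtchouk p (L N) m (y N + (u + 1)).toNat -
        krawtchoukOffDiag p (L N) (y N + u).toNat / N *
          normalizedKrawtchouk p (L N) m (y N + (u - 1)).toNat := by
  filter_upwards [eventually_pos_and_lt_of_tendsto_div hL hy hξ u] with N hN m hm
  have hsucc : (y N + (u + 1)).toNat = (y N + u).toNat + 1 := by omega
  have hpred : (y N + (u - 1)).toNat = (y N + u).toNat - 1 := by omega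
  rw [hsucc, hpred]
  linear_combination (N : ℝ)⁻¹ * normalizedKrawtchouk_recurrence hp
    (Finset.mem_range_succ_iff.mp hm) (show (y N + u).toNat ≤ L N by omega)

theorem asymptoticallyToeplitz_normalizedKrawtchouk (hp : p ∈ Set.Ioo 0 1)
    (hL : Tendsto (fun N ↦ (L N : ℝ) / N) atTop (𝓝 ℓ))
    (hy : Tendsto (fun N ↦ (y N : ℝ) / N) atTop (𝓝 ξ)) (hξ : ξ ∈ Set.Ioo 0 ℓ) :
    AsymptoticallyToeplitz atTop (fun N ↦ Finset.range (L N + 1)) (fun N m ↦ (m / N : ℝ))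
      (fun N u m ↦ normalizedKrawtchouk p (L N) m (y N + u).toNat)
      (p * (ℓ - ξ) + (1 - p) * ξ) √((1 - p) * ξ * (p * (ℓ - ξ))) where
  bounded := by
    refine ⟨ℓ + 1, ?_⟩
    filter_upwards [hL.eventually_lt_const (lt_add_one ℓ)] with N hN m hm
    rw [abs_of_nonneg (by positivity)]
    have hmL : m ≤ L N := Finset.mem_range_succ_iff.mp hm
    exact le_trans (by gcongr) hN.le
  orthonormal := eventually_normalizedKrawtchouk_orthonormal hp hL hy hξ
  recurrence :=
    ⟨fun N u ↦ krawtchoukDiag p (L N) (y N + u).toNat / N,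
      fun N u ↦ krawtchoukOffDiag p (L N) (y N + u).toNat / N,
      fun u ↦ tendsto_krawtchoukDiag_div p hL (tendsto_toNat_add_div hy hξ.1.le u),
      fun u ↦ tendsto_krawtchoukOffDiag_div p hL (tendsto_toNat_add_div hy hξ.1.le u),
      eventually_normalizedKrawtchouk_recurrence (Set.Ioo_subset_Ioc_self hp) hL hy hξ⟩

theorem sum_filter_div_lt_one_eq_krawtchoukKernel (p : ℝ) (L : ℕ) {N : ℕ} (hN : 0 < N)
    (x y : ℕ) :
    ∑ m ∈ Finset.range (L + 1) with (m : ℕ) / (N : ℝ) < 1,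
      normalizedKrawtchouk p L m x * normalizedKrawtchouk p L m y = krawtchoukKernel p L N x y := by
  have hlt (m : ℕ) : (m / N : ℝ) < 1 ↔ m < N := by
    rw [div_lt_one (Nat.cast_pos.mpr hN), Nat.cast_lt]
  simp only [hlt, krawtchoukKernel]
  refine Finset.sum_subset (fun m hm ↦ ?_) fun m hmN hm ↦ ?_
  · exact Finset.mem_range.mpr (Finset.mem_filter.mp hm).2
  · have hmL : L < m := by
      simp only [Finset.mem_filter, Finset.mem_range] at hmN hm
      omega
    simp [normalizedKrawtchouk, Nat.choose_eq_zero_of_lt hmL]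

/-- The angle `φ` of the limiting sine kernel at the macroscopic position `ξ`, when `N` particles
live on about `ℓ * N` sites. Outside the bulk `Real.arccos` clamps it to `0` (empty sites) or to `π`
(full sites). -/
def krawtchoukAngle (p ℓ ξ : ℝ) : ℝ :=
  Real.arccos ((p * (ℓ - ξ) + (1 - p) * ξ - 1) / (2 * √((1 - p) * ξ * (p * (ℓ - ξ)))))

theorem krawtchoukKernel_tendsto_discreteSineKernel_general (hp : p ∈ Set.Ioo 0 1)
    (hL : Tendsto (fun N ↦ (L N : ℝ) / N) atTop (𝓝 ℓ))
    (hy : Tendsto (fun N ↦ (y N : ℝ) / N) atTop (𝓝 ξ)) (hξ : ξ ∈ Set.Ioo 0 ℓ) (u v : ℤ) :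
    Tendsto (fun N ↦ krawtchoukKernel p (L N) N (y N + u).toNat (y N + v).toNat) atTop
      (𝓝 (discreteSineKernel (krawtchoukAngle p ℓ ξ) u v)) := by
  have hB : 0 < √((1 - p) * ξ * (p * (ℓ - ξ))) :=
    Real.sqrt_pos.mpr (mul_pos (mul_pos (sub_pos.mpr hp.2) hξ.1)
      (mul_pos hp.1 (sub_pos.mpr hξ.2)))
  refine ((asymptoticallyToeplitz_normalizedKrawtchouk hp hL hy hξ).tendsto_sum_filter_lt
    hB 1 u v).congr' ?_
  filter_upwards [eventually_gt_atTop 0] with N hN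
  exact sum_filter_div_lt_one_eq_krawtchoukKernel p (L N) hN _ _

end BulkLimit

section HalfFilling

variable {p c : ℝ}

theorem krawtchoukAngle_two (p c : ℝ) :
    krawtchoukAngle p 2 (1 + c) =
      Real.arccos (c * (1 - 2 * p) / (2 * √((1 - c ^ 2) * p * (1 - p)))) := by
  rw [krawtchoukAngle]
  ring_nf

theorem sq_lt_four_mul_of_abs_lt (hp : p ∈ Set.Ioo 0 1) (hc : |c| < 2 * √(p * (1 - p))) :
    c ^ 2 < 4 * (p * (1 - p)) := by
  have hpq : 0 ≤ p * (1 - p) := mul_nonneg hp.1.le (sub_nonneg.mpr hp.2.le)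
  calc c ^ 2 = |c| ^ 2 := (sq_abs c).symm
    _ < (2 * √(p * (1 - p))) ^ 2 := pow_lt_pow_left₀ hc (abs_nonneg c) two_ne_zero
    _ = 4 * (p * (1 - p)) := by rw [mul_pow, Real.sq_sqrt hpq]; norm_num

theorem abs_lt_one_of_abs_lt_two_mul_sqrt (hp : p ∈ Set.Ioo 0 1)
    (hc : |c| < 2 * √(p * (1 - p))) : |c| < 1 :=
  (sq_lt_one_iff_abs_lt_one c).mp (by
    linarith [sq_lt_four_mul_of_abs_lt hp hc, sq_nonneg (1 - 2 * p)])

-- The numerator and denominator of the argument satisfy `den² - num² = 4p(1 - p) - c²`.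
theorem arccos_mem_Ioo_of_abs_lt_two_mul_sqrt (hp : p ∈ Set.Ioo 0 1)
    (hc : |c| < 2 * √(p * (1 - p))) :
    Real.arccos (c * (1 - 2 * p) / (2 * √((1 - c ^ 2) * p * (1 - p)))) ∈ Set.Ioo 0 Real.pi := by
  have hc_sq := sq_lt_four_mul_of_abs_lt hp hc
  have hrad : 0 < (1 - c ^ 2) * p * (1 - p) :=
    mul_pos (mul_pos (sub_pos.mpr ((sq_lt_one_iff_abs_lt_one c).mpr
      (abs_lt_one_of_abs_lt_two_mul_sqrt hp hc))) hp.1) (sub_pos.mpr hp.2)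
  have hden : 0 < 2 * √((1 - c ^ 2) * p * (1 - p)) := by positivity
  have habs : |c * (1 - 2 * p)| < 2 * √((1 - c ^ 2) * p * (1 - p)) := by
    refine abs_lt_of_sq_lt_sq ?_ hden.le
    rw [mul_pow 2, Real.sq_sqrt hrad.le]
    linarith
  obtain ⟨hlower, hupper⟩ := abs_lt.mp habs
  refine ⟨Real.arccos_pos.mpr ((div_lt_one hden).mpr hupper), Real.arccos_lt_pi.mpr ?_⟩
  rwa [lt_div_iff₀ hden, neg_one_mul]

theorem tendsto_two_mul_sub_one_div :
    Tendsto (fun N : ℕ ↦ ((2 * N - 1 : ℕ) : ℝ) / N) atTop (𝓝 2) := by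
  have htwo : Tendsto (fun N : ℕ ↦ (2 * N : ℝ) / N) atTop (𝓝 2) :=
    tendsto_const_nhds.congr' <| by
      filter_upwards [eventually_ne_atTop 0] with N hN
      rw [mul_div_cancel_right₀ _ (Nat.cast_ne_zero.mpr hN)]
  refine (tendsto_add_const_div htwo (-1)).congr' ?_
  filter_upwards [eventually_gt_atTop 0] with N hN
  rw [Nat.cast_sub (by omega)]
  push_cast
  rw [sub_eq_add_neg]

theorem tendsto_natCast_add_div {a : ℕ → ℤ}
    (ha : Tendsto (fun N ↦ (a N : ℝ) / N) atTop (𝓝 c)) :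
    Tendsto (fun N : ℕ ↦ ((N + a N : ℤ) : ℝ) / N) atTop (𝓝 (1 + c)) := by
  refine (ha.const_add 1).congr' ?_
  filter_upwards [eventually_ne_atTop 0] with N hN
  push_cast
  rw [add_div, div_self (Nat.cast_ne_zero.mpr hN)]

end HalfFilling

/-- Bulk limit of the Krawtchouk ensemble: for `p ∈ (0,1)`, `|c| < 2√(p(1−p))`,
`φ = arccos( c(1−2p) / (2√((1−c²)·p·(1−p))) ) ∈ (0,π)`, and `a_N/N → c`, for all fixed
integers `u, v` the Krawtchouk kernel `K^{kr}_{p,2N−1,N}`, shifted by `N + a_N`, converges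
to the discrete sine kernel: the limit is `sin(φ(u−v))/(π(u−v))` for `u ≠ v` and `φ/π` for
`u = v` (the kernel value being set to `0` for those `N` for which the shifted arguments
do not lie in `{0,…,2N−1}`). -/
theorem krawtchoukKernel_tendsto_discreteSineKernel
    (p c : ℝ) (hp : p ∈ Set.Ioo (0 : ℝ) 1) (hc : |c| < 2 * Real.sqrt (p * (1 - p)))
    (a : ℕ → ℤ) (ha : Tendsto (fun N : ℕ => (a N : ℝ) / (N : ℝ)) atTop (𝓝 c))
    (u v : ℤ) :
    Real.arccos (c * (1 - 2 * p) / (2 * Real.sqrt ((1 - c ^ 2) * p * (1 - p))))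
        ∈ Set.Ioo 0 Real.pi
    ∧ Tendsto
        (fun N : ℕ =>
          if 0 ≤ (N : ℤ) + a N + u ∧ (N : ℤ) + a N + u ≤ 2 * (N : ℤ) - 1
              ∧ 0 ≤ (N : ℤ) + a N + v ∧ (N : ℤ) + a N + v ≤ 2 * (N : ℤ) - 1 then
            krawtchoukKernel p (2 * N - 1) N ((N : ℤ) + a N + u).toNat ((N : ℤ) + a N + v).toNat
          else 0)
        atTop
        (𝓝 (if u = v then
              Real.arccos (c * (1 - 2 * p) / (2 * Real.sqrt ((1 - c ^ 2) * p * (1 - p))))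
                / Real.pi
            else
              Real.sin (Real.arccos (c * (1 - 2 * p) /
                    (2 * Real.sqrt ((1 - c ^ 2) * p * (1 - p)))) * ((u : ℝ) - (v : ℝ)))
                / (Real.pi * ((u : ℝ) - (v : ℝ))))) := by
  refine ⟨arccos_mem_Ioo_of_abs_lt_two_mul_sqrt hp hc, ?_⟩
  have hL := tendsto_two_mul_sub_one_div
  have hy := tendsto_natCast_add_div ha
  have hξ : 1 + c ∈ Set.Ioo 0 2 := by
    obtain ⟨hlower, hupper⟩ := abs_lt.mp (abs_lt_one_of_abs_lt_two_mul_sqrt hp hc)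
    constructor <;> linarith
  rw [← krawtchoukAngle_two]
  refine (krawtchoukKernel_tendsto_discreteSineKernel_general hp hL hy hξ u v).congr' ?_
  filter_upwards [eventually_pos_and_lt_of_tendsto_div hL hy hξ u,
    eventually_pos_and_lt_of_tendsto_div hL hy hξ v] with N hu hv
  rw [if_pos (by omega)]

end
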